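/- In the lattice Pic, the sublattice Q = {v ∈ Pic : (v|D₁) = (v|D₂) = (v|D₃) = 0} is a free ℤ-module of rank ℓ₁ + ℓ₂ + ℓ₃ − 2 (assuming each ℓ_m ≥ 1), and every element of the set B = {α₀, α_i^m} lies in Q. -/

import Mathlib

open Finset

variable (ℓ : Fin 3 → ℕ)

/-- Index type for the basis `h`, `e_i^m` of the Picard lattice. -/
abbrev Idx := Unit ⊕ (Σ m : Fin 3, Fin (ℓ m))

/-- The Picard lattice `ℤ h ⊕ ⊕ ℤ e_i^m`, as integer vectors. -/
abbrev Pic := Idx ℓ → ℤ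

/-- Sign of a basis vector: `+1` for `h`, `-1` for the `e_i^m`. -/
def sgn : Idx ℓ → ℤ
  | .inl _ => 1
  | .inr _ => -1

/-- The intersection form: `(h|h)=1`, `(e_i^m|e_j^n) = -δ_{ij}δ_{mn}`, `(h|e_i^m)=0`. -/
def form (v w : Pic ℓ) : ℤ := ∑ i, sgn ℓ i * v i * w i

/-- The class `h` of a line. -/
def h : Pic ℓ := Pi.single (.inl ()) 1

/-- The class `e_i^m` of the exceptional curve over `P_i^m`. -/
def e (m : Fin 3) (i : Fin (ℓ m)) : Pic ℓ := Pi.single (.inr ⟨m, i⟩) 1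

/-- The class `D_m = h - ∑_i e_i^m` of the line `L_m`. -/
def D (m : Fin 3) : Pic ℓ := h ℓ - ∑ i : Fin (ℓ m), e ℓ m i

/-- The simple root `α₀ = h - e₁¹ - e₁² - e₁³`. -/
def α₀ (hℓ : ∀ m, 0 < ℓ m) : Pic ℓ :=
  h ℓ - e ℓ 0 ⟨0, hℓ 0⟩ - e ℓ 1 ⟨0, hℓ 1⟩ - e ℓ 2 ⟨0, hℓ 2⟩

/-- The simple root `α_i^m = e_i^m - e_{i+1}^m` (0-based indexing). -/
def aroot (m : Fin 3) (i : ℕ) (hi : i + 1 < ℓ m) : Pic ℓ :=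
  e ℓ m ⟨i, Nat.lt_of_succ_lt hi⟩ - e ℓ m ⟨i + 1, hi⟩

/-- The reflection `R_α(v) = v + (v|α) α`. -/
def reflect (α v : Pic ℓ) : Pic ℓ := v + form ℓ v α • α

/-- The linear functional `v ↦ (v | D_m)` on `Pic`. -/
def Dfunc (m : Fin 3) : Pic ℓ →ₗ[ℤ] ℤ where
  toFun v := form ℓ v (D ℓ m)
  map_add' x y := by
    simp [form, add_mul, mul_add, Finset.sum_add_distrib]
  map_smul' c x := by
    simp only [form, smul_eq_mul, Pi.smul_apply, RingHom.id_apply, Finset.mul_sum]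
    exact Finset.sum_congr rfl fun i _ => by ring

/-- The root sublattice `Q = {v : (v|D₁) = (v|D₂) = (v|D₃) = 0}`. -/
def Q : Submodule ℤ (Pic ℓ) := ⨅ m : Fin 3, LinearMap.ker (Dfunc ℓ m)

/-!
The functional `v ↦ (v | D_m)` takes the value `δ_{mn}` on `e₁ⁿ`, so together the three functionals
map `Pic` onto `ℤ³`. The rank of their common kernel `Q` is therefore three less than that of `Pic`,
and `Q` is free because it is a submodule of a free module over a principal ideal domain.
-/

section Kernels

open Module

universe u

variable {R ι : Type*} {M : Type u}

theorem surjective_pi_of_apply_eq_ite [Semiring R] [AddCommMonoid M] [Module R M]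
    [Finite ι] [DecidableEq ι] {f : ι → M →ₗ[R] R} {x : ι → M}
    (hfx : ∀ i j, f i (x j) = if i = j then 1 else 0) :
    Function.Surjective (LinearMap.pi f) := by
  have := Fintype.ofFinite ι
  intro w
  refine ⟨∑ j, w j • x j, funext fun i => ?_⟩
  simp [hfx]

variable [Ring R] [StrongRankCondition R] [HasRankNullity.{u} R]
  [AddCommGroup M] [Module R M] [Module.Finite R M]

theorem finrank_ker_add_finrank_of_surjective {N : Type*} [AddCommGroup N] [Module R N]
    {f : M →ₗ[R] N} (hf : Function.Surjective f) :
    finrank R (LinearMap.ker f) + finrank R N = finrank R M := by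
  rw [← (f.quotKerEquivOfSurjective hf).finrank_eq, add_comm,
    Submodule.finrank_quotient_add_finrank]

theorem finrank_iInf_ker_add_card_of_surjective_pi [Fintype ι] {f : ι → M →ₗ[R] R}
    (hf : Function.Surjective (LinearMap.pi f)) :
    finrank R ↥(⨅ i, LinearMap.ker (f i)) + Fintype.card ι = finrank R M := by
  rw [← LinearMap.ker_pi, ← finrank_ker_add_finrank_of_surjective hf,
    finrank_fintype_fun_eq_card]

end Kernels

theorem form_eq_dotProduct (v w : Pic ℓ) : form ℓ v w = (sgn ℓ * v) ⬝ᵥ w := rfl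

theorem form_h_right (v : Pic ℓ) : form ℓ v (h ℓ) = v (.inl ()) := by
  simp [form_eq_dotProduct, h, sgn]

theorem form_e_right (v : Pic ℓ) (m : Fin 3) (i : Fin (ℓ m)) :
    form ℓ v (e ℓ m i) = -v (.inr ⟨m, i⟩) := by
  simp [form_eq_dotProduct, e, sgn]

theorem Dfunc_apply (m : Fin 3) (v : Pic ℓ) :
    Dfunc ℓ m v = v (.inl ()) + ∑ i, v (.inr ⟨m, i⟩) := by
  calc Dfunc ℓ m v = (sgn ℓ * v) ⬝ᵥ (h ℓ - ∑ i, e ℓ m i) := rfl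
    _ = form ℓ v (h ℓ) - ∑ i, form ℓ v (e ℓ m i) := by
        simp only [dotProduct_sub, dotProduct_sum, form_eq_dotProduct]
    _ = v (.inl ()) + ∑ i, v (.inr ⟨m, i⟩) := by
        simp only [form_h_right, form_e_right, sum_neg_distrib, sub_neg_eq_add]

theorem Dfunc_h (m : Fin 3) : Dfunc ℓ m (h ℓ) = 1 := by
  simp [Dfunc_apply, h]

theorem Dfunc_e (m n : Fin 3) (i : Fin (ℓ n)) :
    Dfunc ℓ m (e ℓ n i) = if m = n then 1 else 0 := by
  rcases eq_or_ne m n with rfl | hmn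
  · simp [Dfunc_apply, e, Pi.single_apply]
  · simp [Dfunc_apply, e, hmn]

variable {ℓ} in
theorem mem_Q_iff {v : Pic ℓ} : v ∈ Q ℓ ↔ ∀ m, Dfunc ℓ m v = 0 := by
  simp only [Q, Submodule.mem_iInf, LinearMap.mem_ker]

theorem α₀_mem_Q (hℓ : ∀ m, 0 < ℓ m) : α₀ ℓ hℓ ∈ Q ℓ := by
  refine mem_Q_iff.mpr fun m => ?_
  simp only [α₀, map_sub, Dfunc_h, Dfunc_e]
  fin_cases m <;> rfl

theorem aroot_mem_Q (m : Fin 3) (i : ℕ) (hi : i + 1 < ℓ m) : aroot ℓ m i hi ∈ Q ℓ := by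
  refine mem_Q_iff.mpr fun n => ?_
  simp only [aroot, map_sub, Dfunc_e, sub_self]

theorem finrank_Pic : Module.finrank ℤ (Pic ℓ) = ℓ 0 + ℓ 1 + ℓ 2 + 1 := by
  simp [Fin.sum_univ_three, add_comm]

theorem surjective_pi_Dfunc (hℓ : ∀ m, 0 < ℓ m) :
    Function.Surjective (LinearMap.pi (Dfunc ℓ)) :=
  surjective_pi_of_apply_eq_ite fun m n => Dfunc_e ℓ m n ⟨0, hℓ n⟩

theorem finrank_Q_add_three (hℓ : ∀ m, 0 < ℓ m) :
    Module.finrank ℤ (Q ℓ) + 3 = Module.finrank ℤ (Pic ℓ) :=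
  finrank_iInf_ker_add_card_of_surjective_pi (surjective_pi_Dfunc ℓ hℓ)

/-- `Q` is free of rank `ℓ₁ + ℓ₂ + ℓ₃ - 2` and contains all the simple roots
`α₀` and `α_i^m`. -/
theorem root_lattice_rank (hℓ : ∀ m, 0 < ℓ m) :
    Module.Free ℤ (Q ℓ) ∧
    Module.finrank ℤ (Q ℓ) = ℓ 0 + ℓ 1 + ℓ 2 - 2 ∧
    α₀ ℓ hℓ ∈ Q ℓ ∧
    (∀ (m : Fin 3) (i : ℕ) (hi : i + 1 < ℓ m), aroot ℓ m i hi ∈ Q ℓ) := by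
  have hrank : Module.finrank ℤ (Q ℓ) + 3 = ℓ 0 + ℓ 1 + ℓ 2 + 1 :=
    (finrank_Q_add_three ℓ hℓ).trans (finrank_Pic ℓ)
  exact ⟨inferInstance, by lia, α₀_mem_Q ℓ hℓ, aroot_mem_Q ℓ⟩
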